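/- Let X ⊂ ℝ^d be a non-empty set, α > 0, and let f : ℝ^d → ℝ be a bounded function that is ⌊α⌋-times continuously differentiable on the open δ-neighborhood X^{+δ} of X for some δ > 0. Assume that either (i) α is an integer and ∂^ν f is bounded on X^{+δ} for all multi-indices ν with |ν| = α, or (ii) α is not an integer and, with β = α − ⌊α⌋, for all |ν| = ⌊α⌋ the Hölder seminorm |∂^ν f|_{β,X^{+δ}} is finite. Then |f|_{B^α_{2,∞}(μ)} < ∞ for every finite measure μ on ℝ^d with supp μ ⊂ X. -/

import Mathlib

/-!
Both alternatives say that `D^n f`, where `n = ⌊α⌋`, is Hölder with exponent `β = α - n` on the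
`δ`-neighbourhood `U` of `X`: boundedness gives the case `β = 0`. By the mean value inequality,
applied `n` times along the line `t ↦ x + t h`, an `n`-th difference with step `h` is at most
`‖h‖ ^ n` times the supremum of the `n`-th derivative. For `Δ_h f` in place of `f`, that derivative
is `D^n f (y + h) - D^n f y`, of norm at most `C ‖h‖ ^ β`; hence `‖Δ_h^{n+1} f x‖ ≤ C ‖h‖ ^ α` as
long as the segment from `x` to `x + (n + 1) h` stays in `U`. For `x ∈ X` this fails only if `‖h‖`
is bounded below, and then boundedness of `f` suffices. As `μ`-almost every point lies in
`supp μ ⊆ X`, integrating the pointwise bound against the finite measure `μ` bounds the seminorm.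
-/

open MeasureTheory ENNReal NNReal Real Set

noncomputable section

abbrev Euc (d : ℕ) := EuclideanSpace ℝ (Fin d)

/-- `s`-fold difference operator `Δ_h^s`. -/
def deltaIter {d : ℕ} (s : ℕ) (h : Euc d) (f : Euc d → ℝ) : Euc d → ℝ :=
  (fun (g : Euc d → ℝ) (x : Euc d) => g (x + h) - g x)^[s] f

/-- `s`-th modulus of smoothness `ω_{s,L₂(μ)}(f,t)`. -/
def modSmooth {d : ℕ} (μ : Measure (Euc d)) (s : ℕ) (f : Euc d → ℝ) (t : ℝ) : ℝ≥0∞ :=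
  ⨆ h : {h : Euc d // ‖h‖ ≤ t}, eLpNorm (deltaIter s h.1 f) 2 μ

/-- The Besov seminorm `|f|_{B^α_{2,∞}(μ)}`, with `s = ⌊α⌋ + 1`. -/
def besovSeminorm {d : ℕ} (μ : Measure (Euc d)) (α : ℝ) (f : Euc d → ℝ) : ℝ≥0∞ :=
  ⨆ t : {t : ℝ // 0 < t}, ENNReal.ofReal ((t : ℝ) ^ (-α)) * modSmooth μ (⌊α⌋₊ + 1) f (t : ℝ)

/-- The support of a measure: the complement of the largest open null set. -/
def msupport {E : Type*} [TopologicalSpace E] [MeasurableSpace E] (μ : Measure E) : Set E :=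
  {x | ∀ U : Set E, IsOpen U → x ∈ U → μ U ≠ 0}

section ForwardDifferences

open scoped fwdDiff

variable {M N G : Type*} [AddCommMonoid M] [AddCommMonoid N]

lemma fwdDiff_iter_comp [AddCommGroup G] {φ : M → N} {h : M} {k : N}
    (hφ : ∀ m, φ (m + h) = φ m + k) (f : N → G) (n : ℕ) :
    (Δ_[h])^[n] (f ∘ φ) = (Δ_[k])^[n] f ∘ φ := by
  have hcomm : Function.Semiconj (fun g : N → G ↦ g ∘ φ) Δ_[k] Δ_[h] := fun g ↦ by
    ext m
    simp only [fwdDiff, Function.comp_apply, hφ]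
  exact (hcomm.iterate_right n f).symm

lemma norm_fwdDiff_iter_le [SeminormedAddCommGroup G] {f : M → G} {B : ℝ}
    (hf : ∀ x, ‖f x‖ ≤ B) (n : ℕ) (h x : M) : ‖(Δ_[h])^[n] f x‖ ≤ 2 ^ n * B := by
  induction n generalizing f B with
  | zero => simpa using hf x
  | succ n ih =>
    have hstep : ∀ y, ‖Δ_[h] f y‖ ≤ 2 * B := fun y ↦
      (norm_sub_le_of_le (hf (y + h)) (hf y)).trans_eq (two_mul B).symm
    rw [Function.iterate_succ_apply, pow_succ, mul_assoc]
    exact ih hstep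

end ForwardDifferences

section DerivativeBounds

open scoped fwdDiff

variable {G : Type*} [NormedAddCommGroup G] [NormedSpace ℝ G]

lemma hasDerivWithinAt_fwdDiff_one {g g' : ℝ → G} {a b : ℝ}
    (hg : ∀ t ∈ Icc a (b + 1), HasDerivWithinAt g (g' t) (Icc a (b + 1)) t) {t : ℝ}
    (ht : t ∈ Icc a b) : HasDerivWithinAt (Δ_[1] g) (Δ_[1] g' t) (Icc a b) t := by
  have hshift : MapsTo (· + 1) (Icc a b) (Icc a (b + 1)) := fun s hs ↦
    ⟨by linarith [hs.1], by linarith [hs.2]⟩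
  have hincl : Icc a b ⊆ Icc a (b + 1) := Icc_subset_Icc_right (by linarith)
  have hleft : HasDerivWithinAt (fun s ↦ g (s + 1)) (g' (t + 1)) (Icc a b) t := by
    simpa [Function.comp_def] using
      (hg _ (hshift ht)).scomp t ((hasDerivWithinAt_id t _).add_const 1) hshift
  exact hleft.sub ((hg t (hincl ht)).mono hincl)

lemma norm_fwdDiff_one_iter_le {n : ℕ} {F : ℕ → ℝ → G} {a B : ℝ}
    (hF : ∀ i < n, ∀ t ∈ Icc a (a + n), HasDerivWithinAt (F i) (F (i + 1) t) (Icc a (a + n)) t)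
    (hB : ∀ t ∈ Icc a (a + n), ‖F n t‖ ≤ B) : ‖(Δ_[1])^[n] (F 0) a‖ ≤ B := by
  induction n generalizing F with
  | zero => exact hB a (by simp)
  | succ n ih =>
    rw [Nat.cast_succ, ← add_assoc] at hF hB
    refine ih (F := fun i ↦ Δ_[1] (F i))
      (fun i hi t ht ↦ hasDerivWithinAt_fwdDiff_one (hF i (by lia)) ht) fun t ht ↦ ?_
    have hunit : Icc t (t + 1) ⊆ Icc a (a + n + 1) := Icc_subset_Icc ht.1 (by linarith [ht.2])
    simpa [fwdDiff] using norm_image_sub_le_of_norm_deriv_le_segment'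
      (fun s hs ↦ (hF n n.lt_succ_self s (hunit hs)).mono hunit)
      (fun s hs ↦ hB s (hunit (Ico_subset_Icc_self hs))) (t + 1) (right_mem_Icc.2 (by linarith))

lemma norm_fwdDiff_one_iter_succ_le {n : ℕ} {F : ℕ → ℝ → G} {a B : ℝ}
    (hF : ∀ i < n, ∀ t ∈ Icc a (a + n + 1),
      HasDerivWithinAt (F i) (F (i + 1) t) (Icc a (a + n + 1)) t)
    (hB : ∀ t ∈ Icc a (a + n), ‖F n (t + 1) - F n t‖ ≤ B) : ‖(Δ_[1])^[n + 1] (F 0) a‖ ≤ B :=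
  norm_fwdDiff_one_iter_le (F := fun i ↦ Δ_[1] (F i))
    (fun i hi _ ht ↦ hasDerivWithinAt_fwdDiff_one (hF i hi) ht) hB

end DerivativeBounds

lemma hasDerivWithinAt_iteratedFDerivWithin_line {𝕜 E G : Type*} [NontriviallyNormedField 𝕜]
    [NormedAddCommGroup E] [NormedSpace 𝕜 E] [NormedAddCommGroup G] [NormedSpace 𝕜 G]
    {f : E → G} {U : Set E} {n : WithTop ℕ∞} {i : ℕ} (hU : UniqueDiffOn 𝕜 U)
    (hf : ContDiffOn 𝕜 n f U) (hi : i < n) {x h : E} {I : Set 𝕜}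
    (hI : MapsTo (fun t : 𝕜 ↦ x + t • h) I U) {t : 𝕜} (ht : t ∈ I) :
    HasDerivWithinAt (fun t : 𝕜 ↦ iteratedFDerivWithin 𝕜 i f U (x + t • h) fun _ ↦ h)
      (iteratedFDerivWithin 𝕜 (i + 1) f U (x + t • h) fun _ ↦ h) I t := by
  have hD := (hf.differentiableOn_iteratedFDerivWithin hi hU _ (hI ht)).hasFDerivWithinAt
  have hline : HasDerivWithinAt (fun t : 𝕜 ↦ x + t • h) h I t := by
    simpa using ((hasDerivWithinAt_id t I).smul_const h).const_add x
  rw [iteratedFDerivWithin_succ_apply_left]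
  exact (ContinuousMultilinearMap.apply 𝕜 (fun _ : Fin i ↦ E) G fun _ ↦ h).hasFDerivAt
    |>.comp_hasDerivWithinAt t (hD.comp_hasDerivWithinAt t hline hI)

section Holder

open scoped fwdDiff

lemma holderOnWith_zero_of_norm_le {P V : Type*} [PseudoEMetricSpace P]
    [SeminormedAddCommGroup V] {g : P → V} {s : Set P} {C : ℝ} (hg : ∀ x ∈ s, ‖g x‖ ≤ C) :
    HolderOnWith (C + C).toNNReal 0 g s := fun x hx y hy ↦ by
  rw [NNReal.coe_zero, ENNReal.rpow_zero, mul_one, edist_dist, dist_eq_norm]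
  exact ENNReal.ofReal_le_ofReal (norm_sub_le_of_le (hg x hx) (hg y hy))

variable {E G : Type*} [NormedAddCommGroup E] [NormedSpace ℝ E] [NormedAddCommGroup G]
  [NormedSpace ℝ G] {f : E → G} {n : ℕ} {C β : ℝ≥0}

lemma norm_fwdDiff_iter_succ_le_of_holderOnWith {U : Set E} (hU : UniqueDiffOn ℝ U)
    (hf : ContDiffOn ℝ n f U) (hC : HolderOnWith C β (iteratedFDerivWithin ℝ n f U) U) {x h : E}
    (hseg : MapsTo (fun t : ℝ ↦ x + t • h) (Icc 0 (n + 1)) U) :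
    ‖(Δ_[h])^[n + 1] f x‖ ≤ C * ‖h‖ ^ (β : ℝ) * ‖h‖ ^ n := by
  let D : ℕ → ℝ → G := fun i t ↦ iteratedFDerivWithin ℝ i f U (x + t • h) fun _ ↦ h
  have hline : (Δ_[h])^[n + 1] f x = (Δ_[1])^[n + 1] (D 0) 0 := by
    have hD : D 0 = f ∘ fun t : ℝ ↦ x + t • h := by ext t; simp [D]
    rw [hD, fwdDiff_iter_comp (k := h) (fun t ↦ by rw [add_smul, one_smul, add_assoc])]
    simp
  rw [hline]
  refine norm_fwdDiff_one_iter_succ_le (fun i hi t ht ↦ ?_) fun t ht ↦ ?_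
  · rw [zero_add] at ht ⊢
    exact hasDerivWithinAt_iteratedFDerivWithin_line hU hf (by exact_mod_cast hi) hseg ht
  · have ht₀ : x + t • h ∈ U := hseg ⟨ht.1, by linarith [ht.2]⟩
    have ht₁ : x + (t + 1) • h ∈ U := hseg ⟨by linarith [ht.1], by linarith [ht.2]⟩
    have hosc := hC.dist_le ht₁ ht₀
    rw [dist_eq_norm, dist_eq_norm, add_sub_add_left_eq_sub, ← sub_smul, add_sub_cancel_left,
      one_smul] at hosc
    calc ‖D n (t + 1) - D n t‖
        ≤ ‖iteratedFDerivWithin ℝ n f U (x + (t + 1) • h)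
            - iteratedFDerivWithin ℝ n f U (x + t • h)‖ * ‖h‖ ^ n := by
          simpa [D] using (iteratedFDerivWithin ℝ n f U (x + (t + 1) • h)
            - iteratedFDerivWithin ℝ n f U (x + t • h)).le_opNorm fun _ ↦ h
      _ ≤ C * ‖h‖ ^ (β : ℝ) * ‖h‖ ^ n := by gcongr

lemma mapsTo_line_thickening {X : Set E} {δ r : ℝ} {x h : E} (hx : x ∈ X) (hr : r * ‖h‖ < δ) :
    MapsTo (fun t : ℝ ↦ x + t • h) (Icc 0 r) (Metric.thickening δ X) := fun t ht ↦ by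
  refine Metric.mem_thickening_iff.2 ⟨x, hx, ?_⟩
  rw [dist_self_add_left, norm_smul, Real.norm_of_nonneg ht.1]
  exact (mul_le_mul_of_nonneg_right ht.2 (norm_nonneg h)).trans_lt hr

lemma exists_norm_fwdDiff_iter_succ_le_rpow {X : Set E} {δ : ℝ} (hδ : 0 < δ)
    (hbdd : ∃ B, ∀ x, ‖f x‖ ≤ B) (hf : ContDiffOn ℝ n f (Metric.thickening δ X))
    (hC : HolderOnWith C β (iteratedFDerivWithin ℝ n f (Metric.thickening δ X))
      (Metric.thickening δ X)) :
    ∃ K : ℝ≥0, ∀ x ∈ X, ∀ h, ‖(Δ_[h])^[n + 1] f x‖ ≤ K * ‖h‖ ^ (n + β : ℝ) := by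
  obtain ⟨B, hB⟩ := hbdd
  have hB₀ : 0 ≤ B := (norm_nonneg _).trans (hB 0)
  set ρ : ℝ := δ / (n + 1)
  have hρ : 0 < ρ := by positivity
  let L : ℝ≥0 := ⟨2 ^ (n + 1) * B / ρ ^ (n + β : ℝ), by positivity⟩
  refine ⟨max C L, fun x hx h ↦ ?_⟩
  rcases lt_or_ge ‖h‖ ρ with hsmall | hlarge
  · have hstep : (n + 1) * ‖h‖ < δ := (lt_div_iff₀' (by positivity)).1 hsmall
    calc ‖(Δ_[h])^[n + 1] f x‖ ≤ C * ‖h‖ ^ (β : ℝ) * ‖h‖ ^ n :=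
          norm_fwdDiff_iter_succ_le_of_holderOnWith Metric.isOpen_thickening.uniqueDiffOn hf hC
            (mapsTo_line_thickening hx hstep)
      _ = C * ‖h‖ ^ (n + β : ℝ) := by
          rw [Real.rpow_add_of_nonneg (norm_nonneg h) n.cast_nonneg β.coe_nonneg,
            Real.rpow_natCast, mul_assoc, mul_comm (‖h‖ ^ n)]
      _ ≤ max C L * ‖h‖ ^ (n + β : ℝ) := by gcongr; exact le_max_left C L
  · calc ‖(Δ_[h])^[n + 1] f x‖ ≤ 2 ^ (n + 1) * B := norm_fwdDiff_iter_le hB _ h x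
      _ = L * ρ ^ (n + β : ℝ) := (div_mul_cancel₀ _ (Real.rpow_pos_of_pos hρ _).ne').symm
      _ ≤ max C L * ‖h‖ ^ (n + β : ℝ) := by gcongr; exact le_max_right C L

end Holder

lemma msupport_eq_support {E : Type*} [TopologicalSpace E] [MeasurableSpace E] (μ : Measure E) :
    msupport μ = μ.support := by
  simp only [Measure.support_eq_forall_isOpen, msupport, pos_iff_ne_zero, forall_comm (α := _ ∈ _)]

section Besov

open scoped fwdDiff

variable {d : ℕ} {μ : Measure (Euc d)} {f : Euc d → ℝ} {α : ℝ} {K : ℝ≥0}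

lemma deltaIter_eq_fwdDiff_iter (s : ℕ) (h : Euc d) (f : Euc d → ℝ) :
    deltaIter s h f = (Δ_[h])^[s] f := rfl

lemma modSmooth_le_of_ae_bound {s : ℕ} (hα : 0 ≤ α)
    (hf : ∀ h, ∀ᵐ x ∂μ, |deltaIter s h f x| ≤ K * ‖h‖ ^ α) (t : ℝ) :
    modSmooth μ s f t ≤ μ univ ^ (2⁻¹ : ℝ) * ENNReal.ofReal (K * t ^ α) := by
  refine iSup_le fun ⟨h, ht⟩ ↦ ?_
  have hbound : ∀ᵐ x ∂μ, ‖deltaIter s h f x‖ ≤ K * t ^ α := by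
    filter_upwards [hf h] with x hx
    exact hx.trans (by gcongr)
  simpa using eLpNorm_le_of_ae_bound (p := 2) hbound

lemma besovSeminorm_le_of_ae_bound (hα : 0 ≤ α)
    (hf : ∀ h, ∀ᵐ x ∂μ, |deltaIter (⌊α⌋₊ + 1) h f x| ≤ K * ‖h‖ ^ α) :
    besovSeminorm μ α f ≤ μ univ ^ (2⁻¹ : ℝ) * K := by
  refine iSup_le fun ⟨t, ht⟩ ↦ ?_
  have hcancel : t ^ (-α) * (K * t ^ α) = K := by
    rw [mul_left_comm, ← Real.rpow_add ht, neg_add_cancel, Real.rpow_zero, mul_one]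
  calc ENNReal.ofReal (t ^ (-α)) * modSmooth μ (⌊α⌋₊ + 1) f t
      ≤ ENNReal.ofReal (t ^ (-α)) * (μ univ ^ (2⁻¹ : ℝ) * ENNReal.ofReal (K * t ^ α)) := by
        gcongr
        exact modSmooth_le_of_ae_bound hα hf t
    _ = μ univ ^ (2⁻¹ : ℝ) * K := by
        rw [mul_left_comm, ← ENNReal.ofReal_mul (by positivity), hcancel, ENNReal.ofReal_coe_nnreal]

end Besov

/-- Proposition: sufficient condition for finite Besov seminorm.
If `f : ℝ^d → ℝ` is bounded and `⌊α⌋`-times continuously differentiable on the open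
`δ`-neighborhood `X^{+δ}` of a non-empty set `X`, and either (i) `α` is an integer and all
partial derivatives of order `α` (equivalently, the `⌊α⌋`-th iterated derivative) are bounded
on `X^{+δ}`, or (ii) `α` is not an integer and all partial derivatives of order `⌊α⌋`
(equivalently, the `⌊α⌋`-th iterated derivative) are `(α - ⌊α⌋)`-Hölder on `X^{+δ}`,
then `|f|_{B^α_{2,∞}(μ)} < ∞` for every finite measure `μ` with `supp μ ⊆ X`. -/
theorem statement_0 {d : ℕ} (X : Set (Euc d)) (hX : X.Nonempty) (α : ℝ) (hα : 0 < α)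
    (f : Euc d → ℝ) (hbdd : ∃ C : ℝ, ∀ x, |f x| ≤ C) (δ : ℝ) (hδ : 0 < δ)
    (hsmooth : ContDiffOn ℝ (⌊α⌋₊ : ℕ∞) f (Metric.thickening δ X))
    (hcase :
      ((∃ k : ℕ, α = k) ∧
        ∃ C : ℝ, ∀ x ∈ Metric.thickening δ X,
          ‖iteratedFDerivWithin ℝ ⌊α⌋₊ f (Metric.thickening δ X) x‖ ≤ C) ∨
      ((¬ ∃ k : ℕ, α = k) ∧
        ∃ C : ℝ≥0, HolderOnWith C (α - ⌊α⌋₊).toNNReal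
          (iteratedFDerivWithin ℝ ⌊α⌋₊ f (Metric.thickening δ X)) (Metric.thickening δ X))) :
    ∀ μ : Measure (Euc d), IsFiniteMeasure μ → msupport μ ⊆ X →
      besovSeminorm μ α f ≠ ⊤ := by
  intro μ _ hμ
  obtain ⟨C, hC⟩ : ∃ C : ℝ≥0, HolderOnWith C (α - ⌊α⌋₊).toNNReal
      (iteratedFDerivWithin ℝ ⌊α⌋₊ f (Metric.thickening δ X)) (Metric.thickening δ X) := by
    rcases hcase with ⟨⟨k, hk⟩, C, hC⟩ | ⟨-, hholder⟩
    · have hβ : (α - ⌊α⌋₊).toNNReal = 0 := by simp [hk]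
      exact ⟨_, hβ ▸ holderOnWith_zero_of_norm_le hC⟩
    · exact hholder
  obtain ⟨K, hK⟩ := exists_norm_fwdDiff_iter_succ_le_rpow hδ hbdd (mod_cast hsmooth) hC
  have hexp : (⌊α⌋₊ + (α - ⌊α⌋₊).toNNReal : ℝ) = α := by
    rw [Real.coe_toNNReal _ (sub_nonneg.2 (Nat.floor_le hα.le)), add_sub_cancel]
  have hae : ∀ᵐ x ∂μ, x ∈ X :=
    Filter.mem_of_superset Measure.support_mem_ae (msupport_eq_support μ ▸ hμ)
  have hle : besovSeminorm μ α f ≤ μ univ ^ (2⁻¹ : ℝ) * K :=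
    besovSeminorm_le_of_ae_bound hα.le fun h ↦ hae.mono fun x hx ↦ by
      simpa only [deltaIter_eq_fwdDiff_iter, hexp, Real.norm_eq_abs] using hK x hx h
  refine ne_top_of_le_ne_top (ENNReal.mul_ne_top ?_ ENNReal.coe_ne_top) hle
  exact ENNReal.rpow_ne_top_of_nonneg (by positivity) (measure_ne_top μ univ)
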